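/- Let Z^{6⁴}(τ,z) = 2·(η(τ)²η(2τ)²η(3τ)²/η(6τ)²)·φ_{−2,1}(τ,z) be the twined elliptic genus for the M₂₄ class 6b. Then for all τ ∈ ℍ and z ∈ ℂ, the sum of the slashes of Z^{6⁴} by M_{1/6} = (1,0;6,1) and M_{5/6} = (5,−1;6,−1) (representing the two width-one cusps 1/6 and 5/6 of Γ₀(36)) equals +Z^{6⁴}: exp(−12πi z²/(6τ+1))·Z^{6⁴}( τ/(6τ+1), z/(6τ+1) ) + exp(−12πi z²/(6τ−1))·Z^{6⁴}( (5τ−1)/(6τ−1), z/(6τ−1) ) = Z^{6⁴}(τ,z). -/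

import Mathlib

open Complex


/-- The Dedekind eta function. -/
noncomputable def Eta (τ : ℂ) : ℂ :=
  Complex.exp (Real.pi * I * τ / 12) *
    ∏' n : ℕ, (1 - Complex.exp (2 * Real.pi * I * ((n : ℂ) + 1) * τ))

noncomputable def θ₁ (τ z : ℂ) : ℂ :=
  -I * ∑' n : ℤ, (-1 : ℂ) ^ n *
    Complex.exp (Real.pi * I * ((n : ℂ) + 1 / 2) ^ 2 * τ + (2 * (n : ℂ) + 1) * Real.pi * I * z)

noncomputable def θ₂ (τ z : ℂ) : ℂ :=
  ∑' n : ℤ,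
    Complex.exp (Real.pi * I * ((n : ℂ) + 1 / 2) ^ 2 * τ + (2 * (n : ℂ) + 1) * Real.pi * I * z)

noncomputable def θ₃ (τ z : ℂ) : ℂ :=
  ∑' n : ℤ, Complex.exp (Real.pi * I * (n : ℂ) ^ 2 * τ + 2 * (n : ℂ) * Real.pi * I * z)

noncomputable def θ₄ (τ z : ℂ) : ℂ :=
  ∑' n : ℤ, (-1 : ℂ) ^ n *
    Complex.exp (Real.pi * I * (n : ℂ) ^ 2 * τ + 2 * (n : ℂ) * Real.pi * I * z)

/-- The weak Jacobi form φ_{0,1}. -/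
noncomputable def φ01 (τ z : ℂ) : ℂ :=
  4 * ((θ₂ τ z / θ₂ τ 0) ^ 2 + (θ₃ τ z / θ₃ τ 0) ^ 2 + (θ₄ τ z / θ₄ τ 0) ^ 2)

/-- The weak Jacobi form φ_{−2,1}. -/
noncomputable def φm21 (τ z : ℂ) : ℂ := θ₁ τ z ^ 2 / Eta τ ^ 6

/-- Twined elliptic genus for the class 6b (cycle shape 6^4). -/
noncomputable def Z6b (τ z : ℂ) : ℂ :=
  2 * (Eta τ ^ 2 * Eta (2 * τ) ^ 2 * Eta (3 * τ) ^ 2 / Eta (6 * τ) ^ 2) * φm21 τ z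

open scoped Real

/-! ### The Dedekind eta function -/

lemma im_neg_one_div_pos {τ : ℂ} (hτ : 0 < τ.im) : 0 < (-1 / τ).im := by
  simpa [neg_div, inv_neg] using UpperHalfPlane.im_inv_neg_coe_pos ⟨τ, hτ⟩

lemma Eta_eq_eta (τ : ℂ) : Eta τ = ModularForm.eta τ := by
  unfold Eta ModularForm.eta
  simp_rw [ModularForm.eta_q_eq_cexp]
  congr 1
  unfold Function.Periodic.qParam
  congr 1
  push_cast
  ring

lemma Eta_ne_zero {τ : ℂ} (hτ : 0 < τ.im) : Eta τ ≠ 0 := by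
  rw [Eta_eq_eta]
  exact ModularForm.eta_ne_zero hτ

lemma Eta_sq_S {τ : ℂ} (hτ : 0 < τ.im) : Eta (-1 / τ) ^ 2 = -I * τ * Eta τ ^ 2 := by
  have h := ModularForm.eta_comp_eq_csqrt_I_inv hτ
  simp only [Function.comp_apply, Pi.smul_apply, Pi.mul_apply, smul_eq_mul] at h
  have hsq (x : ℂ) : sqrt x ^ 2 = x := by simp [Complex.sqrt]
  rw [Eta_eq_eta, Eta_eq_eta, h, mul_pow, mul_pow, inv_pow, hsq, hsq, inv_I]
  ring

lemma Eta_add_one (τ : ℂ) : Eta (τ + 1) = cexp (π * I / 12) * Eta τ := by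
  unfold Eta
  have h (n : ℕ) : cexp (2 * π * I * ((n : ℂ) + 1) * (τ + 1)) =
      cexp (2 * π * I * ((n : ℂ) + 1) * τ) := by
    rw [exp_eq_exp_iff_exists_int]
    exact ⟨n + 1, by push_cast; ring⟩
  simp_rw [h]
  rw [← mul_assoc, ← Complex.exp_add]
  ring_nf

lemma Eta_add_nat (τ : ℂ) (m : ℕ) : Eta (τ + m) = cexp (π * I / 12 * m) * Eta τ := by
  induction m with
  | zero => simp
  | succ m ih =>
    rw [Nat.cast_succ, ← add_assoc, Eta_add_one, ih, ← mul_assoc, ← Complex.exp_add]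
    ring_nf

/-- The transformation of `η(kτ)²` under `(1,0;km,1)`. -/
lemma Eta_sq_lower_unipotent {τ σ : ℂ} (hτ : 0 < τ.im) (hσ : 0 < σ.im) (k m : ℕ) (hk : 0 < k)
    (h : σ * (k * m * τ + 1) = τ) :
    Eta (k * σ) ^ 2 = (k * m * τ + 1) * cexp (-(π * I / 6 * m)) * Eta (k * τ) ^ 2 := by
  have him {ρ : ℂ} (hρ : 0 < ρ.im) : 0 < (-1 / (k * ρ)).im := by
    refine im_neg_one_div_pos ?_
    simpa using mul_pos (Nat.cast_pos.mpr hk) hρ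
  have hk0 : (k : ℂ) ≠ 0 := by exact_mod_cast hk.ne'
  have hτ0 : τ ≠ 0 := by rintro rfl; simp at hτ
  have hσ0 : σ ≠ 0 := by rintro rfl; simp at hσ
  have hS {ρ : ℂ} (hρ : 0 < ρ.im) (hρ0 : ρ ≠ 0) :
      Eta (k * ρ) ^ 2 = -I * (-1 / (k * ρ)) * Eta (-1 / (k * ρ)) ^ 2 := by
    rw [← Eta_sq_S (him hρ)]
    congr 2
    field_simp
  have hd : (k * m * τ + 1 : ℂ) ≠ 0 := by
    intro h0
    rw [h0, mul_zero] at h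
    exact hτ0 h.symm
  have hshift : (-1 / (k * τ) : ℂ) = -1 / (k * σ) + m := by
    rw [← h]
    field_simp
    linear_combination (-(k * m : ℂ)) * h
  have hexp : cexp (-(π * I / 6 * m)) * cexp (π * I / 12 * m) ^ 2 = 1 := by
    rw [← Complex.exp_nat_mul, ← Complex.exp_add, Complex.exp_eq_one_iff]
    exact ⟨0, by push_cast; ring⟩
  rw [hS hσ hσ0, hS hτ hτ0, hshift, Eta_add_nat, ← hshift, mul_pow]
  have hcoef : (k * m * τ + 1 : ℂ) * (-1 / (k * τ)) = -1 / (k * σ) := by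
    field_simp
    linear_combination -h
  generalize Eta (-1 / (k * σ)) = E
  rw [← hcoef]
  linear_combination (I * ((k * m * τ + 1 : ℂ) * (-1 / (k * τ))) * E ^ 2) * hexp

/-! ### The theta function and `φ_{−2,1}` -/

lemma θ₁_eq_jacobiTheta₂ (τ z : ℂ) :
    θ₁ τ z = -I * (cexp (π * I * τ / 4 + π * I * z) * jacobiTheta₂ (z + 1 / 2 + τ / 2) τ) := by
  unfold θ₁ jacobiTheta₂
  rw [← tsum_mul_left (a := cexp _)]
  congr 1
  refine tsum_congr fun n ↦ ?_
  rw [jacobiTheta₂_term, ← exp_pi_mul_I, ← Complex.exp_int_mul, ← Complex.exp_add,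
    ← Complex.exp_add]
  ring_nf

lemma θ₁_neg (τ z : ℂ) : θ₁ τ (-z) = -θ₁ τ z := by
  unfold θ₁
  rw [← mul_neg, ← tsum_neg, ← (Equiv.subLeft (-1 : ℤ)).tsum_eq]
  congr 1
  refine tsum_congr fun n ↦ ?_
  have hsign : (-1 : ℂ) ^ (-1 - n) = -(-1) ^ n := by
    rw [zpow_sub₀ (by norm_num), zpow_neg_one, div_eq_mul_inv, ← inv_zpow]
    norm_num
  rw [Equiv.subLeft_apply, hsign, neg_mul]
  push_cast
  ring_nf

lemma θ₁_sq_S {τ : ℂ} (hτ : 0 < τ.im) (z : ℂ) :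
    θ₁ (-1 / τ) (z / τ) ^ 2 = I * τ * cexp (2 * π * I * z ^ 2 / τ) * θ₁ τ z ^ 2 := by
  have hτ0 : τ ≠ 0 := by rintro rfl; simp at hτ
  have h := jacobiTheta₂_functional_equation (z - 1 / 2 + τ / 2) τ
  have harg : (z - 1 / 2 + τ / 2) / τ = z / τ + 1 / 2 + -1 / τ / 2 := by
    field_simp
    ring
  have hper : jacobiTheta₂ (z - 1 / 2 + τ / 2) τ = jacobiTheta₂ (z + 1 / 2 + τ / 2) τ := by
    rw [← jacobiTheta₂_add_left]
    ring_nf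
  have hroot : ((-I * τ) ^ (1 / 2 : ℂ)) ^ 2 = -I * τ := by
    simp
  have hroot0 : (-I * τ) ^ (1 / 2 : ℂ) ≠ 0 := by
    intro h0
    rw [h0] at hroot
    simp [hτ0] at hroot
  rw [harg, hper] at h
  rw [θ₁_eq_jacobiTheta₂, θ₁_eq_jacobiTheta₂, h]
  have hexp : cexp (π * I * (-1 / τ) / 4 + π * I * (z / τ)) ^ 2 =
      cexp (π * I) * (cexp (2 * π * I * z ^ 2 / τ) * cexp (π * I * τ / 4 + π * I * z) ^ 2 *
        cexp (-π * I * (z - 1 / 2 + τ / 2) ^ 2 / τ) ^ 2) := by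
    rw [← Complex.exp_nat_mul, ← Complex.exp_nat_mul,
      ← Complex.exp_nat_mul, ← Complex.exp_add, ← Complex.exp_add, ← Complex.exp_add,
      exp_eq_exp_iff_exists_int]
    refine ⟨-1, ?_⟩
    push_cast
    field_simp
    ring
  simp only [mul_pow, div_pow, one_pow, hroot, hexp, exp_pi_mul_I]
  field_simp

lemma θ₁_sq_add_one (τ z : ℂ) : θ₁ (τ + 1) z ^ 2 = I * θ₁ τ z ^ 2 := by
  have h : θ₁ (τ + 1) z = cexp (π * I / 4) * θ₁ τ z := by
    unfold θ₁
    rw [mul_left_comm, ← tsum_mul_left (a := cexp _)]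
    congr 1
    refine tsum_congr fun n ↦ ?_
    rw [mul_left_comm, ← Complex.exp_add]
    congr 1
    obtain ⟨j, hj⟩ := Int.even_mul_succ_self n
    have hj' : (n : ℂ) * (n + 1) = j + j := by exact_mod_cast hj
    rw [exp_eq_exp_iff_exists_int]
    exact ⟨j, by linear_combination (π * I) * hj'⟩
  rw [h, mul_pow, ← Complex.exp_nat_mul,
    show ((2 : ℕ) : ℂ) * (π * I / 4) = π / 2 * I by push_cast; ring, exp_pi_div_two_mul_I]

lemma φm21_neg (τ z : ℂ) : φm21 τ (-z) = φm21 τ z := by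
  rw [φm21, φm21, θ₁_neg, neg_sq]

lemma φm21_add_one (τ z : ℂ) : φm21 (τ + 1) z = φm21 τ z := by
  have h : cexp (π * I / 12) ^ 6 = I := by
    rw [← Complex.exp_nat_mul,
      show ((6 : ℕ) : ℂ) * (π * I / 12) = π / 2 * I by push_cast; ring, exp_pi_div_two_mul_I]
  rw [φm21, φm21, θ₁_sq_add_one, Eta_add_one, mul_pow, h, mul_div_mul_left _ _ I_ne_zero]

lemma φm21_add_nat (τ z : ℂ) (m : ℕ) : φm21 (τ + m) z = φm21 τ z := by
  induction m with
  | zero => simp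
  | succ m ih => rw [Nat.cast_succ, ← add_assoc, φm21_add_one, ih]

lemma φm21_S {τ : ℂ} (hτ : 0 < τ.im) (z : ℂ) :
    φm21 (-1 / τ) (z / τ) = cexp (2 * π * I * z ^ 2 / τ) / τ ^ 2 * φm21 τ z := by
  have hτ0 : τ ≠ 0 := by rintro rfl; simp at hτ
  have hη := Eta_ne_zero hτ
  rw [φm21, φm21, θ₁_sq_S hτ, show Eta (-1 / τ) ^ 6 = (Eta (-1 / τ) ^ 2) ^ 3 by ring, Eta_sq_S hτ]
  field_simp
  simp only [I_sq]
  ring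

/-- The invariance of `φ_{−2,1}` under the weight `−2`, index `1` slash by `(1,0;m,1)`. -/
lemma φm21_lower_unipotent {τ σ : ℂ} (hτ : 0 < τ.im) (hσ : 0 < σ.im) (z : ℂ) (m : ℕ)
    (h : σ * (m * τ + 1) = τ) :
    cexp (-2 * π * I * m * z ^ 2 / (m * τ + 1)) * φm21 σ (z / (m * τ + 1)) =
      φm21 τ z / (m * τ + 1) ^ 2 := by
  have hτ0 : τ ≠ 0 := by rintro rfl; simp at hτ
  have hσ0 : σ ≠ 0 := by rintro rfl; simp at hσ
  have hd : (m * τ + 1 : ℂ) ≠ 0 := by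
    intro h0
    rw [h0, mul_zero] at h
    exact hτ0 h.symm
  have hS {ρ : ℂ} (hρ : 0 < ρ.im) (hρ0 : ρ ≠ 0) (y : ℂ) :
      φm21 ρ y = cexp (-2 * π * I * y ^ 2 / ρ) * ρ ^ 2 * φm21 (-1 / ρ) (-y / ρ) := by
    have := φm21_S (im_neg_one_div_pos hρ) (-y / ρ)
    rw [show -1 / (-1 / ρ) = ρ by field_simp, show -y / ρ / (-1 / ρ) = y by field_simp] at this
    rw [this, show 2 * π * I * (-y / ρ) ^ 2 / (-1 / ρ) = -2 * π * I * y ^ 2 / ρ by field_simp]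
    field_simp
  have hshift : -1 / τ = -1 / σ + m := by
    field_simp
    linear_combination -h
  have hz : -(z / (m * τ + 1)) / σ = -z / τ := by
    field_simp
    linear_combination z * h
  rw [hS hσ hσ0, hS hτ hτ0 z, hz, hshift, φm21_add_nat]
  have hexp : cexp (-2 * π * I * m * z ^ 2 / (m * τ + 1)) *
      cexp (-2 * π * I * (z / (m * τ + 1)) ^ 2 / σ) = cexp (-2 * π * I * z ^ 2 / τ) := by
    rw [← Complex.exp_add]
    congr 1
    nth_rewrite 3 [← h]
    field_simp
    linear_combination -(m * z ^ 2) * h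
  rw [← hexp]
  generalize φm21 (-1 / σ) (-z / τ) = ψ
  have hτ2 : τ ^ 2 = σ ^ 2 * (m * τ + 1) ^ 2 := by rw [← mul_pow, h]
  rw [hτ2]
  field_simp

/-! ### The slashes of the twined elliptic genus -/

lemma Z6b_neg (τ z : ℂ) : Z6b τ (-z) = Z6b τ z := by
  rw [Z6b, Z6b, φm21_neg]

lemma Z6b_add_one (τ z : ℂ) : Z6b (τ + 1) z = Z6b τ z := by
  have h (m : ℕ) : Eta (m * (τ + 1)) = cexp (π * I / 12) ^ m * Eta (m * τ) := by
    rw [mul_add, mul_one, Eta_add_nat, ← Complex.exp_nat_mul, mul_comm]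
    ring_nf
  have h2 := h 2
  have h3 := h 3
  have h6 := h 6
  push_cast at h2 h3 h6
  have h0 := Complex.exp_ne_zero (π * I / 12)
  rw [Z6b, Z6b, φm21_add_one, Eta_add_one, h2, h3, h6]
  field_simp

/-- The slash of `Z^{6⁴}` by `(1,0;6,1)`. -/
lemma Z6b_slash_one_six {τ σ : ℂ} (hτ : 0 < τ.im) (hσ : 0 < σ.im) (z : ℂ)
    (h : σ * (6 * τ + 1) = τ) :
    cexp (-12 * π * I * z ^ 2 / (6 * τ + 1)) * Z6b σ (z / (6 * τ + 1)) =
      cexp (π * I / 3) * Z6b τ z := by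
  have hd : (6 * τ + 1 : ℂ) ≠ 0 := by
    intro h0
    rw [h0, mul_zero] at h
    simp [← h] at hτ
  have h1 := Eta_sq_lower_unipotent hτ hσ 1 6 one_pos (by push_cast; linear_combination h)
  have h2 := Eta_sq_lower_unipotent hτ hσ 2 3 two_pos (by push_cast; linear_combination h)
  have h3 := Eta_sq_lower_unipotent hτ hσ 3 2 three_pos (by push_cast; linear_combination h)
  have h6 := Eta_sq_lower_unipotent hτ hσ 6 1 (by norm_num) (by push_cast; linear_combination h)
  have hφ := φm21_lower_unipotent hτ hσ z 6 (by push_cast; exact h)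
  push_cast at h1 h2 h3 h6 hφ
  norm_num only [one_mul, mul_one] at h1 h2 h3 h6
  have hη : Eta (6 * τ) ≠ 0 := Eta_ne_zero (by simpa using hτ)
  have hexp : cexp (-(π * I / 6 * 6)) * cexp (-(π * I / 6 * 3)) * cexp (-(π * I / 6 * 2)) =
      cexp (π * I / 3) * cexp (-(π * I / 6)) := by
    rw [← Complex.exp_add, ← Complex.exp_add, ← Complex.exp_add, exp_eq_exp_iff_exists_int]
    exact ⟨-1, by push_cast; ring⟩
  rw [show -2 * π * I * 6 * z ^ 2 = -12 * π * I * z ^ 2 by ring] at hφ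
  rw [Z6b, Z6b, mul_left_comm, hφ, h1, h2, h3, h6]
  have h0 := Complex.exp_ne_zero (-(π * I / 6))
  generalize cexp (-(π * I / 6 * 6)) = e₁ at hexp ⊢
  generalize cexp (-(π * I / 6 * 3)) = e₂ at hexp ⊢
  generalize cexp (-(π * I / 6 * 2)) = e₃ at hexp ⊢
  generalize cexp (-(π * I / 6)) = e₆ at hexp h0 ⊢
  generalize Eta (6 * τ) = E₆ at hη ⊢
  generalize Eta (3 * τ) = E₃
  field_simp
  linear_combination Eta τ ^ 2 * Eta (2 * τ) ^ 2 * E₃ ^ 2 * φm21 τ z * hexp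

lemma exp_pi_div_three_add_inv : cexp (π * I / 3) + (cexp (π * I / 3))⁻¹ = 1 := by
  rw [← Complex.exp_neg]
  have h := Complex.two_cos (π / 3)
  rw [show (π / 3 : ℂ) = ((π / 3 : ℝ) : ℂ) by push_cast; rfl, ← ofReal_cos,
    Real.cos_pi_div_three] at h
  push_cast at h
  ring_nf at h ⊢
  exact h.symm

/-- The sum of the slashes of Z^{6⁴} by M_{1/6} = (1,0;6,1) and M_{5/6} = (5,−1;6,−1)
equals +Z^{6⁴}. -/
theorem Z6b_slash_cusps (τ : ℂ) (hτ : 0 < τ.im) (z : ℂ) :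
    Complex.exp (-12 * Real.pi * I * z ^ 2 / (6 * τ + 1)) *
          Z6b (τ / (6 * τ + 1)) (z / (6 * τ + 1)) +
        Complex.exp (-12 * Real.pi * I * z ^ 2 / (6 * τ - 1)) *
          Z6b ((5 * τ - 1) / (6 * τ - 1)) (z / (6 * τ - 1)) =
      Z6b τ z := by
  have him {d : ℂ} (hd : d ≠ 0) (hdτ : (τ * (starRingEnd ℂ) d).im = τ.im) : 0 < (τ / d).im := by
    rw [div_eq_mul_inv, Complex.inv_def, ← mul_assoc, im_mul_ofReal, hdτ]
    exact mul_pos hτ (inv_pos.mpr (normSq_pos.mpr hd))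
  have hd : (6 * τ + 1 : ℂ) ≠ 0 := by
    intro h0
    have := congrArg im h0
    simp at this
    linarith
  have hd' : (1 - 6 * τ : ℂ) ≠ 0 := by
    intro h0
    have := congrArg im h0
    simp at this
    linarith
  have hσ := him hd (by simp; ring)
  have hσ' := him hd' (by simp; ring)
  have hplus := Z6b_slash_one_six hτ hσ z (div_mul_cancel₀ _ hd)
  have hd6 : 6 * (τ / (1 - 6 * τ)) + 1 = 1 / (1 - 6 * τ) := by
    field_simp
    ring
  have hminus := Z6b_slash_one_six hσ' hτ (z / (1 - 6 * τ)) (by rw [hd6]; ring)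
  rw [hd6, show z / (1 - 6 * τ) / (1 / (1 - 6 * τ)) = z by field_simp,
    show -12 * π * I * (z / (1 - 6 * τ)) ^ 2 / (1 / (1 - 6 * τ)) =
      -(-12 * π * I * z ^ 2 / (6 * τ - 1)) by
        rw [show 6 * τ - 1 = -(1 - 6 * τ) by ring]; field_simp,
    Complex.exp_neg] at hminus
  have hd'' : (6 * τ - 1 : ℂ) ≠ 0 := by
    rw [← neg_ne_zero, neg_sub]
    exact hd'
  have hτ' : (5 * τ - 1) / (6 * τ - 1) = τ / (1 - 6 * τ) + 1 := by
    rw [show 1 - 6 * τ = -(6 * τ - 1) by ring, div_neg, eq_comm, neg_add_eq_sub,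
      one_sub_div hd'']
    ring
  have hz' : z / (6 * τ - 1) = -(z / (1 - 6 * τ)) := by
    rw [show 1 - 6 * τ = -(6 * τ - 1) by ring, div_neg, neg_neg]
  rw [hplus, hτ', hz', Z6b_add_one, Z6b_neg]
  have hsum := exp_pi_div_three_add_inv
  have h0 := Complex.exp_ne_zero (-12 * π * I * z ^ 2 / (6 * τ - 1))
  have h0' := Complex.exp_ne_zero (π * I / 3)
  have hslash : cexp (-12 * π * I * z ^ 2 / (6 * τ - 1)) * Z6b (τ / (1 - 6 * τ)) (z / (1 - 6 * τ)) =
      (cexp (π * I / 3))⁻¹ * Z6b τ z := by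
    field_simp at hminus ⊢
    linear_combination -hminus
  rw [hslash]
  linear_combination Z6b τ z * hsum
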